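/- Let E be a unital idempotent CPTP map on d×d complex matrices and let ρ be a positive definite density matrix. Then the infimum over positive definite density matrices σ with E(σ) = σ of the quantum relative entropy S(ρ‖σ) = Tr(ρ log ρ) − Tr(ρ log σ) equals S(E(ρ)) − S(ρ) = Tr(ρ log ρ) − Tr(E(ρ) log E(ρ)), and it is attained at σ = E(ρ). -/

import Mathlib

open Matrix
open scoped ComplexOrder

/-- Matrix power `A ^ t` for real `t`, via the continuous functional calculus
(applying `x ↦ x ^ t` to the eigenvalues of a Hermitian matrix `A`). -/
noncomputable def mpow {d : ℕ} (A : Matrix (Fin d) (Fin d) ℂ) (t : ℝ) :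
    Matrix (Fin d) (Fin d) ℂ :=
  cfc (fun x : ℝ => x ^ t) A

/-- The Tsallis-based relative entropy
`S̃_a(ρ|σ) = ((Tr (ρ^a σ^(1-a)))^(1/a) - 1) / (a - 1)`. -/
noncomputable def tsallis {d : ℕ} (a : ℝ) (ρ σ : Matrix (Fin d) (Fin d) ℂ) : ℝ :=
  ((((mpow ρ a * mpow σ (1 - a)).trace).re) ^ (1 / a) - 1) / (a - 1)

/-- Matrix logarithm via the functional calculus. -/
noncomputable def mlog {d : ℕ} (A : Matrix (Fin d) (Fin d) ℂ) :
    Matrix (Fin d) (Fin d) ℂ :=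
  cfc Real.log A

/-- The quantum relative entropy `S(ρ‖σ) = Tr(ρ log ρ) - Tr(ρ log σ)`. -/
noncomputable def relEnt {d : ℕ} (ρ σ : Matrix (Fin d) (Fin d) ℂ) : ℝ :=
  ((ρ * mlog ρ).trace).re - ((ρ * mlog σ).trace).re

theorem aux_trace_cfc {d : ℕ} {A B : Matrix (Fin d) (Fin d) ℂ}
    (hA : A.IsHermitian) (hB : B.IsHermitian) :
    ∃ p : Fin d → Fin d → ℝ, (∀ i j, 0 ≤ p i j) ∧ ∀ f g : ℝ → ℝ,
      (cfc f A * cfc g B).trace.re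
        = ∑ i, ∑ j, f (hA.eigenvalues i) * g (hB.eigenvalues j) * p i j := by
  set U : Matrix (Fin d) (Fin d) ℂ := (hA.eigenvectorUnitary).1 with hU
  set V : Matrix (Fin d) (Fin d) ℂ := (hB.eigenvectorUnitary).1 with hV
  refine ⟨fun i j => Complex.normSq ((Uᴴ * V) i j), fun i j => Complex.normSq_nonneg _, ?_⟩
  intro f g
  rw [hA.cfc_eq, hB.cfc_eq, Matrix.IsHermitian.cfc, Matrix.IsHermitian.cfc,
    Unitary.conjStarAlgAut_apply, Unitary.conjStarAlgAut_apply]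
  rw [← hU, ← hV, star_eq_conjTranspose, star_eq_conjTranspose]
  have h1 : (U * diagonal (RCLike.ofReal ∘ f ∘ hA.eigenvalues) * Uᴴ *
      (V * diagonal (RCLike.ofReal ∘ g ∘ hB.eigenvalues) * Vᴴ)).trace
      = (diagonal (RCLike.ofReal ∘ f ∘ hA.eigenvalues) * (Uᴴ * V) *
        (diagonal (RCLike.ofReal ∘ g ∘ hB.eigenvalues) * (Uᴴ * V)ᴴ)).trace := by
    rw [conjTranspose_mul, conjTranspose_conjTranspose]
    simp only [Matrix.mul_assoc]
    rw [Matrix.trace_mul_comm]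
    simp only [Matrix.mul_assoc]
  rw [h1]
  simp only [Matrix.trace, Matrix.diag_apply]
  rw [Complex.re_sum]
  refine Finset.sum_congr rfl fun i _ => ?_
  rw [Matrix.mul_apply, Complex.re_sum]
  refine Finset.sum_congr rfl fun j _ => ?_
  rw [Matrix.diagonal_mul, Matrix.diagonal_mul, conjTranspose_apply]
  generalize (Uᴴ * V) i j = w
  simp [Complex.normSq_apply]
  ring

/-- Klein's inequality. -/
theorem aux_klein {d : ℕ} {A B : Matrix (Fin d) (Fin d) ℂ}
    (hA : A.PosDef) (hB : B.PosDef) (hAt : A.trace = 1) (hBt : B.trace = 1) :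
    0 ≤ relEnt A B := by
  obtain ⟨p, hp, h⟩ := aux_trace_cfc hA.isHermitian hB.isHermitian
  have sA : IsSelfAdjoint A := hA.isHermitian
  have sB : IsSelfAdjoint B := hB.isHermitian
  have e1 : ∀ C : Matrix (Fin d) (Fin d) ℂ, IsSelfAdjoint C → cfc (fun x : ℝ => x) C = C :=
    fun C hC => cfc_id' ℝ C
  have e2 : ∀ C : Matrix (Fin d) (Fin d) ℂ, IsSelfAdjoint C → cfc (fun _ : ℝ => (1 : ℝ)) C = 1 :=
    fun C hC => cfc_const_one ℝ C
  have cont : ∀ f : ℝ → ℝ, ContinuousOn f (spectrum ℝ A) := fun f =>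
    (Matrix.finite_real_spectrum (A := A)).continuousOn f
  have e3 : cfc (fun x : ℝ => x * Real.log x) A = A * mlog A := by
    rw [cfc_mul _ _ A (cont _) (cont _), e1 A sA, mlog]
  have t1 := h (fun x => x * Real.log x) (fun _ => 1)
  have t2 := h (fun x => x) Real.log
  have t3 := h (fun x => x) (fun _ => 1)
  have t4 := h (fun _ => 1) (fun x => x)
  rw [e3, e2 B sB, mul_one] at t1
  rw [e1 A sA] at t2
  rw [e1 A sA, e2 B sB, mul_one, hAt] at t3
  rw [e2 A sA, e1 B sB, one_mul, hBt] at t4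
  have t34 := t3.symm.trans t4
  have key : ∀ i j, hA.isHermitian.eigenvalues i * Real.log (hB.isHermitian.eigenvalues j) * p i j
      + hA.isHermitian.eigenvalues i * 1 * p i j
      ≤ hA.isHermitian.eigenvalues i * Real.log (hA.isHermitian.eigenvalues i) * 1 * p i j
      + 1 * hB.isHermitian.eigenvalues j * p i j := by
    intro i j
    have ha := hA.eigenvalues_pos i
    have hb := hB.eigenvalues_pos j
    generalize hA.isHermitian.eigenvalues i = a at *
    generalize hB.isHermitian.eigenvalues j = b at *
    have hl := Real.log_le_sub_one_of_pos (div_pos hb ha)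
    rw [Real.log_div hb.ne' ha.ne'] at hl
    have h2 : a * (Real.log b - Real.log a) ≤ b - a := by
      calc a * (Real.log b - Real.log a) ≤ a * (b / a - 1) := by gcongr
        _ = b - a := by field_simp
    nlinarith [mul_le_mul_of_nonneg_right h2 (hp i j)]
  have key2 := Finset.sum_le_sum fun i (_ : i ∈ Finset.univ) =>
    Finset.sum_le_sum fun j (_ : j ∈ Finset.univ) => key i j
  simp only [Finset.sum_add_distrib] at key2
  rw [relEnt, t1, mlog, t2]
  linarith

/-- Hermitian fixed points of a unital channel commute with the Kraus operators. -/
theorem aux_commute {d n : ℕ} (K : Fin n → Matrix (Fin d) (Fin d) ℂ)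
    (hTP : ∑ i, (K i)ᴴ * K i = 1) (hU : ∑ i, K i * (K i)ᴴ = 1)
    {σ : Matrix (Fin d) (Fin d) ℂ} (hσ : σ.IsHermitian)
    (hfix : ∑ i, K i * σ * (K i)ᴴ = σ) (i : Fin n) : K i * σ = σ * K i := by
  have hσ' : σᴴ = σ := hσ
  have hsum : ∑ i, ((K i * σ - σ * K i) * (K i * σ - σ * K i)ᴴ).trace = 0 := by
    have e : ∀ i, ((K i * σ - σ * K i) * (K i * σ - σ * K i)ᴴ).trace
        = ((σ * σ) * ((K i)ᴴ * K i)).trace - ((K i * σ * (K i)ᴴ) * σ).trace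
          - (σ * (K i * σ * (K i)ᴴ)).trace + (σ * (K i * (K i)ᴴ) * σ).trace := by
      intro i
      rw [conjTranspose_sub, conjTranspose_mul, conjTranspose_mul, hσ']
      have e1 : ((σ * σ) * ((K i)ᴴ * K i)).trace = (K i * σ * (σ * (K i)ᴴ)).trace := by
        rw [← Matrix.mul_assoc, Matrix.trace_mul_comm]
        simp only [Matrix.mul_assoc]
      rw [e1, ← Matrix.trace_sub, ← Matrix.trace_sub, ← Matrix.trace_add]
      congr 1
      noncomm_ring
    simp only [e, Finset.sum_add_distrib, Finset.sum_sub_distrib, ← Matrix.trace_sum,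
      ← Finset.mul_sum, ← Finset.sum_mul, hTP, hU, hfix]
    simp
  have h0 := (Finset.sum_eq_zero_iff_of_nonneg (fun i _ =>
    (Matrix.posSemidef_self_mul_conjTranspose (K i * σ - σ * K i)).trace_nonneg)).1 hsum i
    (Finset.mem_univ i)
  exact sub_eq_zero.1 (Matrix.trace_mul_conjTranspose_self_eq_zero_iff.1 h0)

/-- `Tr(E(ρ) log σ) = Tr(ρ log σ)` for fixed points `σ`. -/
theorem aux_trace_log {d n : ℕ} (K : Fin n → Matrix (Fin d) (Fin d) ℂ)
    (hTP : ∑ i, (K i)ᴴ * K i = 1) (hU : ∑ i, K i * (K i)ᴴ = 1)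
    {σ : Matrix (Fin d) (Fin d) ℂ} (hσ : σ.IsHermitian)
    (hfix : ∑ i, K i * σ * (K i)ᴴ = σ) (ρ : Matrix (Fin d) (Fin d) ℂ) :
    ((∑ i, K i * ρ * (K i)ᴴ) * mlog σ).trace = (ρ * mlog σ).trace := by
  have hc : ∀ i, K i * mlog σ = mlog σ * K i := fun i =>
    (Commute.cfc_real (show Commute σ (K i) from
      (aux_commute K hTP hU hσ hfix i).symm) Real.log).symm.eq
  calc ((∑ i, K i * ρ * (K i)ᴴ) * mlog σ).trace
      = ∑ i, (ρ * ((K i)ᴴ * K i) * mlog σ).trace := by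
        rw [Finset.sum_mul, Matrix.trace_sum]
        refine Finset.sum_congr rfl fun i _ => ?_
        rw [Matrix.mul_assoc, Matrix.mul_assoc, Matrix.trace_mul_comm]
        simp only [Matrix.mul_assoc]
        rw [hc i]
    _ = (ρ * mlog σ).trace := by
        rw [← Matrix.trace_sum, ← Finset.sum_mul, ← Finset.mul_sum, hTP, mul_one]

theorem aux_posDef {d n : ℕ} (K : Fin n → Matrix (Fin d) (Fin d) ℂ)
    (hU : ∑ i, K i * (K i)ᴴ = 1) {ρ : Matrix (Fin d) (Fin d) ℂ} (hρ : ρ.PosDef) :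
    (∑ i, K i * ρ * (K i)ᴴ).PosDef := by
  have hps : ∀ i, (K i * ρ * (K i)ᴴ).PosSemidef := fun i =>
    hρ.posSemidef.mul_mul_conjTranspose_same (K i)
  have hs : (∑ i, K i * ρ * (K i)ᴴ).PosSemidef := Matrix.posSemidef_sum _ fun i _ => hps i
  refine Matrix.PosDef.of_dotProduct_mulVec_pos hs.isHermitian fun x hx => ?_
  obtain ⟨i, hi⟩ : ∃ i, (K i)ᴴ *ᵥ x ≠ 0 := by
    by_contra! hcon
    apply hx
    rw [← Matrix.one_mulVec x, ← hU, Matrix.sum_mulVec]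
    refine Finset.sum_eq_zero fun i _ => ?_
    rw [← Matrix.mulVec_mulVec, hcon i, Matrix.mulVec_zero]
  rw [Matrix.sum_mulVec, dotProduct_sum]
  refine Finset.sum_pos' (fun i _ => (hps i).dotProduct_mulVec_nonneg x) ⟨i, Finset.mem_univ i, ?_⟩
  have := hρ.dotProduct_mulVec_pos hi
  rwa [Matrix.star_mulVec, conjTranspose_conjTranspose, ← Matrix.dotProduct_mulVec,
    Matrix.mulVec_mulVec, Matrix.mulVec_mulVec] at this

/-- For a unital idempotent CPTP map `E` and a positive definite density matrix `ρ`,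
the infimum of the relative entropy `S(ρ‖σ)` over positive definite density matrices
`σ` fixed by `E` equals `S(E(ρ)) - S(ρ) = Tr(ρ log ρ) - Tr(E(ρ) log E(ρ))`, and it is
attained at `σ = E(ρ)`. -/
theorem stmt_14 {d : ℕ}
    (E : Matrix (Fin d) (Fin d) ℂ →ₗ[ℂ] Matrix (Fin d) (Fin d) ℂ)
    (hKraus : ∃ (n : ℕ) (K : Fin n → Matrix (Fin d) (Fin d) ℂ),
      (∀ X, E X = ∑ i, K i * X * (K i)ᴴ) ∧ ∑ i, (K i)ᴴ * K i = 1)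
    (hUnital : E 1 = 1)
    (hIdem : ∀ X, E (E X) = E X)
    (ρ : Matrix (Fin d) (Fin d) ℂ) (hρ : ρ.PosDef) (hρtr : ρ.trace = 1) :
    (⨅ σ : {σ : Matrix (Fin d) (Fin d) ℂ // σ.PosDef ∧ σ.trace = 1 ∧ E σ = σ},
        relEnt ρ (σ : Matrix (Fin d) (Fin d) ℂ))
      = ((ρ * mlog ρ).trace).re - ((E ρ * mlog (E ρ)).trace).re ∧
    (E ρ).PosDef ∧ (E ρ).trace = 1 ∧ E (E ρ) = E ρ ∧
    relEnt ρ (E ρ) = ((ρ * mlog ρ).trace).re - ((E ρ * mlog (E ρ)).trace).re := by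
  obtain ⟨n, K, hK, hTP⟩ := hKraus
  have hU : ∑ i, K i * (K i)ᴴ = 1 := by
    have := hK 1
    rw [hUnital] at this
    simpa using this.symm
  have hpd : (E ρ).PosDef := by
    rw [hK]; exact aux_posDef K hU hρ
  have htr : (E ρ).trace = 1 := by
    rw [hK, Matrix.trace_sum, ← hρtr]
    have : ∀ i, (K i * ρ * (K i)ᴴ).trace = (ρ * ((K i)ᴴ * K i)).trace := fun i => by
      rw [Matrix.mul_assoc, Matrix.trace_mul_comm, Matrix.mul_assoc]
    simp only [this]
    rw [← Matrix.trace_sum, ← Finset.mul_sum, hTP, mul_one]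
  have hlog : ∀ σ : Matrix (Fin d) (Fin d) ℂ, σ.PosDef → E σ = σ →
      (ρ * mlog σ).trace = (E ρ * mlog σ).trace := fun σ hσ hf => by
    rw [hK ρ]
    exact (aux_trace_log K hTP hU hσ.isHermitian ((hK σ).symm.trans hf) ρ).symm
  have hrel : relEnt ρ (E ρ)
      = ((ρ * mlog ρ).trace).re - ((E ρ * mlog (E ρ)).trace).re := by
    rw [relEnt, hlog (E ρ) hpd (hIdem ρ)]
  refine ⟨?_, hpd, htr, hIdem ρ, hrel⟩
  rw [← hrel]
  have hle : ∀ σ : {σ : Matrix (Fin d) (Fin d) ℂ // σ.PosDef ∧ σ.trace = 1 ∧ E σ = σ},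
      relEnt ρ (E ρ) ≤ relEnt ρ (σ : Matrix (Fin d) (Fin d) ℂ) := by
    rintro ⟨σ, h1, h2, h3⟩
    have hk := aux_klein hpd h1 htr h2
    rw [hrel]
    simp only [relEnt] at hk ⊢
    rw [hlog σ h1 h3]
    linarith
  have hne : Nonempty {σ : Matrix (Fin d) (Fin d) ℂ // σ.PosDef ∧ σ.trace = 1 ∧ E σ = σ} :=
    ⟨⟨E ρ, hpd, htr, hIdem ρ⟩⟩
  refine le_antisymm ?_ (le_ciInf hle)
  exact ciInf_le (f := fun σ : {σ : Matrix (Fin d) (Fin d) ℂ //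
    σ.PosDef ∧ σ.trace = 1 ∧ E σ = σ} => relEnt ρ (σ : Matrix (Fin d) (Fin d) ℂ))
    ⟨relEnt ρ (E ρ), by rintro _ ⟨σ, rfl⟩; exact hle σ⟩ ⟨E ρ, hpd, htr, hIdem ρ⟩
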